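/- Let k be a positive integer and let n be an integer with k² − k + 1 ≤ n ≤ k². Then δ(n) ≥ 2k, and δ(n) = 2k holds if and only if n = k² − l² for some non-negative integer l with l² ≤ k − 1. -/

import Mathlib

/-- `staircaseDelta n` is the minimum of `r + s` over all pairs of positive
integers `(r, s)` with `r ≤ s` and `r * s = n`. -/
noncomputable def staircaseDelta (n : ℕ) : ℕ :=
  sInf {w : ℕ | ∃ r s : ℕ, 0 < r ∧ r ≤ s ∧ r * s = n ∧ w = r + s}

/-!
By AM-GM, `4 * n ≤ δ(n) ^ 2`, while `n > k ^ 2 - k` says exactly that `(2 * k - 1) ^ 2 < 4 * n`;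
hence `2 * k ≤ δ(n)`. A factorization `n = r * s` with `r + s = 2 * k` has the form
`n = (k - l) * (k + l) = k ^ 2 - l ^ 2`, and then `n > k ^ 2 - k` says exactly that `l ^ 2 < k`.
-/

theorem exists_staircaseDelta_eq_add {n : ℕ} (hn : 0 < n) :
    ∃ r s : ℕ, 0 < r ∧ r ≤ s ∧ r * s = n ∧ staircaseDelta n = r + s :=
  Nat.sInf_mem (s := {w | ∃ r s : ℕ, 0 < r ∧ r ≤ s ∧ r * s = n ∧ w = r + s})
    ⟨1 + n, 1, n, one_pos, hn, one_mul n, rfl⟩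

theorem staircaseDelta_mul_le_add {r s : ℕ} (hr : 0 < r) (hs : 0 < s) :
    staircaseDelta (r * s) ≤ r + s := by
  rcases le_total r s with hrs | hsr
  · exact Nat.sInf_le ⟨r, s, hr, hrs, rfl, rfl⟩
  · exact Nat.sInf_le ⟨s, r, hs, hsr, mul_comm s r, add_comm r s⟩

theorem four_mul_le_staircaseDelta_sq (n : ℕ) : 4 * n ≤ staircaseDelta n ^ 2 := by
  rcases n.eq_zero_or_pos with rfl | hn
  · simp
  · obtain ⟨r, s, -, -, rfl, hδ⟩ := exists_staircaseDelta_eq_add hn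
    rw [hδ, ← mul_assoc]
    exact four_mul_le_sq_add r s

theorem two_mul_le_staircaseDelta {k n : ℕ} (h : k ^ 2 < n + k) : 2 * k ≤ staircaseDelta n := by
  by_contra! hδ
  have amgm : 4 * n ≤ staircaseDelta n ^ 2 := four_mul_le_staircaseDelta_sq n
  zify at h hδ amgm
  have hsq : (staircaseDelta n : ℤ) ^ 2 ≤ (2 * k - 1) ^ 2 :=
    pow_le_pow_left₀ (by positivity) (by lia) 2
  linarith

theorem staircaseDelta_sq_sub_sq_le {k l : ℕ} (h : l < k) :
    staircaseDelta (k ^ 2 - l ^ 2) ≤ 2 * k := by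
  rw [Nat.sq_sub_sq]
  calc staircaseDelta ((k + l) * (k - l))
      ≤ (k + l) + (k - l) := staircaseDelta_mul_le_add (by lia) (by lia)
    _ = 2 * k := by lia

theorem exists_add_sq_eq_sq_of_staircaseDelta_eq_two_mul {k n : ℕ} (hn : 0 < n)
    (h : staircaseDelta n = 2 * k) : ∃ l : ℕ, n + l ^ 2 = k ^ 2 := by
  obtain ⟨r, s, -, hrs, rfl, hδ⟩ := exists_staircaseDelta_eq_add hn
  obtain ⟨l, rfl⟩ : ∃ l, k = r + l := Nat.exists_eq_add_of_le (by lia)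
  obtain rfl : s = r + 2 * l := by lia
  exact ⟨l, by ring⟩

theorem stmt13_general {k n : ℕ} (h : k ^ 2 - k + 1 ≤ n) :
    2 * k ≤ staircaseDelta n ∧
    (staircaseDelta n = 2 * k ↔ ∃ l : ℕ, l ^ 2 ≤ k - 1 ∧ n = k ^ 2 - l ^ 2) := by
  have hlower : 2 * k ≤ staircaseDelta n := two_mul_le_staircaseDelta (by lia)
  refine ⟨hlower, fun hδ ↦ ?_, ?_⟩
  · obtain ⟨l, hl⟩ := exists_add_sq_eq_sq_of_staircaseDelta_eq_two_mul (by lia) hδ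
    exact ⟨l, by lia, by lia⟩
  · rintro ⟨l, -, rfl⟩
    have hlk : l < k := lt_of_pow_lt_pow_left₀ 2 k.zero_le (by lia)
    exact (staircaseDelta_sq_sub_sq_le hlk).antisymm hlower

/-- Let `k ≥ 1` and `k^2 - k + 1 ≤ n ≤ k^2`. Then `δ(n) ≥ 2k`, and `δ(n) = 2k`
iff `n = k^2 - l^2` for some `l ≥ 0` with `l^2 ≤ k - 1`. -/
theorem stmt13 (k n : ℕ) (hk : 0 < k) (h1 : k ^ 2 - k + 1 ≤ n) (h2 : n ≤ k ^ 2) :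
    2 * k ≤ staircaseDelta n ∧
    (staircaseDelta n = 2 * k ↔ ∃ l : ℕ, l ^ 2 ≤ k - 1 ∧ n = k ^ 2 - l ^ 2) :=
  stmt13_general h1
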